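/- Let H_A, H_B, H_C be finite-dimensional complex Hilbert spaces and ψ a unit vector in H_A ⊗ H_B ⊗ H_C. Let A₁, A₂ be self-adjoint operators on H_A with A₁² = A₂² = 1, B₁, B₂ self-adjoint operators on H_B with B₁² = B₂² = 1, and G a self-adjoint operator on H_C with G² = 1. Define correlators ⟨A_x B_y⟩ = ⟨ψ, (A_x ⊗ B_y ⊗ 1)ψ⟩ and ⟨B₁G⟩ = ⟨ψ, (1 ⊗ B₁ ⊗ G)ψ⟩, and let β_CHSH = ⟨A₁B₁⟩ + ⟨A₁B₂⟩ + ⟨A₂B₁⟩ − ⟨A₂B₂⟩. Then (β_CHSH)² + 4·|⟨B₁G⟩|² ≤ 8. -/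

import Mathlib

open Matrix Kronecker
set_option linter.unusedSimpArgs false

/-- Real part of the expectation value, as a real-linear map. -/
noncomputable def expVal {n : Type*} [Fintype n] (ψ : n → ℂ) : Matrix n n ℂ →ₗ[ℝ] ℝ where
  toFun M := (star ψ ⬝ᵥ (M.mulVec ψ)).re
  map_add' M N := by simp [Matrix.add_mulVec, dotProduct_add]
  map_smul' r M := by simp [Matrix.smul_mulVec, dotProduct_smul]

open scoped ComplexOrder in
lemma expVal_sq_nonneg {n : Type*} [Fintype n] (ψ : n → ℂ) (M : Matrix n n ℂ)
    (hM : M.IsHermitian) : 0 ≤ expVal ψ (M * M) := by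
  have h := (Matrix.posSemidef_conjTranspose_mul_self M).dotProduct_mulVec_nonneg ψ
  rw [hM.eq] at h
  exact (Complex.le_def.1 h).1

lemma chsh_sos {R : Type*} [Ring R] [Algebra ℝ R] (a0 a1 b0 b1 g : R)
    (ha0 : a0 * a0 = 1) (ha1 : a1 * a1 = 1) (hb0 : b0 * b0 = 1) (hb1 : b1 * b1 = 1)
    (hg : g * g = 1)
    (c00 : b0 * a0 = a0 * b0) (c01 : b0 * a1 = a1 * b0)
    (c10 : b1 * a0 = a0 * b1) (c11 : b1 * a1 = a1 * b1)
    (g0 : g * a0 = a0 * g) (g1 : g * a1 = a1 * g)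
    (k0 : g * b0 = b0 * g) (k1 : g * b1 = b1 * g)
    (X S Y W : R)
    (hX : X = a0 * b0 + a0 * b1 + a1 * b0 - a1 * b1)
    (hS : S = a0 * b0 - a1 * b0 + a0 * b1 + a1 * b1)
    (hY : Y = b0 * g) (hW : W = b1 * g) (c s N : ℝ) :
    (N • (1 : R) - (c • X + (2 * s) • Y)) * (N • (1 : R) - (c • X + (2 * s) • Y))
      + ((2 * s) • W - c • S) * ((2 * s) • W - c • S)
    = (N ^ 2 + 8 * (c ^ 2 + s ^ 2)) • (1 : R) - (2 * N) • (c • X + (2 * s) • Y) := by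
  have r {x y z w : R} (h : x * y = z * w) (t : R) : x * (y * t) = z * (w * t) := by
    rw [← mul_assoc, h, mul_assoc]
  have q {x : R} (h : x * x = 1) (t : R) : x * (x * t) = t := by
    rw [← mul_assoc, h, one_mul]
  have e1 : X * X + S * S = (8 : ℝ) • (1 : R) := by
    have : (8 : ℝ) • (1 : R) = 1 + 1 + 1 + 1 + 1 + 1 + 1 + 1 := by module
    rw [this, hX, hS]
    simp only [mul_add, add_mul, mul_sub, sub_mul, mul_assoc, c00, c01, c10, c11, r c00, r c01,
      r c10, r c11, ha0, ha1, hb0, hb1, q ha0, q ha1, q hb0, q hb1]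
    abel
  have e2 : Y * Y = 1 := by
    rw [hY]; simp only [mul_assoc, k0, r k0, hg, hb0, q hb0]
  have e3 : W * W = 1 := by
    rw [hW]; simp only [mul_assoc, k1, r k1, hg, hb1, q hb1]
  have e4 : X * Y + Y * X = S * W + W * S := by
    rw [hX, hS, hY, hW]
    simp only [mul_add, add_mul, mul_sub, sub_mul, mul_assoc, c00, c01, c10, c11, r c00, r c01,
      r c10, r c11, ha0, ha1, hb0, hb1, q ha0, q ha1, q hb0, q hb1, g0, g1, k0, k1, r g0, r g1,
      r k0, r k1]
    abel
  have e5 : S * S = (8 : ℝ) • (1 : R) - X * X := by rw [← e1]; abel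
  have e6 : W * S = X * Y + Y * X - S * W := by rw [e4]; abel
  simp only [mul_add, add_mul, mul_sub, sub_mul, smul_mul_assoc, mul_smul_comm, one_mul, mul_one,
    e2, e3, e5, e6]
  module

lemma chsh_abstract {n : Type*} [Fintype n] [DecidableEq n] (ψ : n → ℂ)
    (hψ : star ψ ⬝ᵥ ψ = 1) (a0 a1 b0 b1 g : Matrix n n ℂ)
    (sa0 : a0.IsHermitian) (sa1 : a1.IsHermitian) (sb0 : b0.IsHermitian) (sb1 : b1.IsHermitian)
    (sg : g.IsHermitian)
    (ha0 : a0 * a0 = 1) (ha1 : a1 * a1 = 1) (hb0 : b0 * b0 = 1) (hb1 : b1 * b1 = 1)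
    (hg : g * g = 1)
    (c00 : b0 * a0 = a0 * b0) (c01 : b0 * a1 = a1 * b0)
    (c10 : b1 * a0 = a0 * b1) (c11 : b1 * a1 = a1 * b1)
    (g0 : g * a0 = a0 * g) (g1 : g * a1 = a1 * g)
    (k0 : g * b0 = b0 * g) (k1 : g * b1 = b1 * g) :
    (expVal ψ (a0 * b0) + expVal ψ (a0 * b1) + expVal ψ (a1 * b0) - expVal ψ (a1 * b1)) ^ 2
      + 4 * (expVal ψ (b0 * g)) ^ 2 ≤ 8 := by
  have hm {x y : Matrix n n ℂ} (hx : x.IsHermitian) (hy : y.IsHermitian) (h : y * x = x * y) :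
      (x * y).IsHermitian := by
    rw [Matrix.IsHermitian, Matrix.conjTranspose_mul, hx.eq, hy.eq, h]
  have hs {x : Matrix n n ℂ} (hx : x.IsHermitian) (r : ℝ) : (r • x).IsHermitian := by
    rw [Matrix.IsHermitian, Matrix.conjTranspose_smul, hx.eq, star_trivial]
  have h1 : expVal ψ 1 = 1 := by
    change (star ψ ⬝ᵥ ((1 : Matrix n n ℂ).mulVec ψ)).re = 1
    rw [Matrix.one_mulVec, hψ]; rfl
  set c := expVal ψ (a0 * b0) + expVal ψ (a0 * b1) + expVal ψ (a1 * b0) - expVal ψ (a1 * b1)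
    with hc
  set s := 2 * expVal ψ (b0 * g) with hsd
  have key := congrArg (expVal ψ) (chsh_sos a0 a1 b0 b1 g ha0 ha1 hb0 hb1 hg c00 c01 c10 c11
    g0 g1 k0 k1 _ _ _ _ rfl rfl rfl rfl c s (c ^ 2 + s ^ 2))
  have hX := (((hm sa0 sb0 c00).add (hm sa0 sb1 c10)).add (hm sa1 sb0 c01)).sub (hm sa1 sb1 c11)
  have hS := (((hm sa0 sb0 c00).sub (hm sa1 sb0 c01)).add (hm sa0 sb1 c10)).add (hm sa1 sb1 c11)
  have p1 := expVal_sq_nonneg ψ _ ((hs Matrix.isHermitian_one (c ^ 2 + s ^ 2)).sub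
    ((hs hX c).add (hs (hm sb0 sg k0) (2 * s))))
  have p2 := expVal_sq_nonneg ψ _ ((hs (hm sb1 sg k1) (2 * s)).sub (hs hS c))
  rw [map_add] at key
  have hr : expVal ψ (((c ^ 2 + s ^ 2) ^ 2 + 8 * (c ^ 2 + s ^ 2)) • (1 : Matrix n n ℂ)
      - (2 * (c ^ 2 + s ^ 2)) •
        (c • (a0 * b0 + a0 * b1 + a1 * b0 - a1 * b1) + (2 * s) • (b0 * g)))
      = 8 * (c ^ 2 + s ^ 2) - (c ^ 2 + s ^ 2) ^ 2 := by
    rw [map_sub, map_smul, map_smul, map_add, map_smul, map_smul, map_sub, map_add, map_add, h1,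
      ← hc]
    simp only [smul_eq_mul]
    have : 2 * s * expVal ψ (b0 * g) = s ^ 2 := by rw [hsd]; ring
    rw [this]; ring
  rw [hr] at key
  have h4 : c ^ 2 + 4 * (expVal ψ (b0 * g)) ^ 2 = c ^ 2 + s ^ 2 := by rw [hsd]; ring
  rw [h4]
  by_contra! hcon
  nlinarith

/-- Quantum monogamy relation for CHSH: for a tripartite state `ψ` and `±1`-valued
(self-adjoint, squaring to the identity) observables `A₁, A₂` for Alice, `B₁, B₂` for Bob
and `G` for the third party, `(β_CHSH)² + 4|⟨B₁G⟩|² ≤ 8`. -/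
theorem chsh_quantum_monogamy (dA dB dC : ℕ)
    (ψ : Fin dA × Fin dB × Fin dC → ℂ) (hψ : star ψ ⬝ᵥ ψ = 1)
    (A : Fin 2 → Matrix (Fin dA) (Fin dA) ℂ)
    (B : Fin 2 → Matrix (Fin dB) (Fin dB) ℂ)
    (G : Matrix (Fin dC) (Fin dC) ℂ)
    (hA : ∀ x, (A x).IsHermitian ∧ A x * A x = 1)
    (hB : ∀ y, (B y).IsHermitian ∧ B y * B y = 1)
    (hG : G.IsHermitian ∧ G * G = 1)
    (E : Fin 2 → Fin 2 → ℝ)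
    (hE : ∀ x y, E x y =
      (star ψ ⬝ᵥ ((A x ⊗ₖ (B y ⊗ₖ (1 : Matrix (Fin dC) (Fin dC) ℂ))).mulVec ψ)).re)
    (bg : ℂ)
    (hbg : bg = star ψ ⬝ᵥ
      (((1 : Matrix (Fin dA) (Fin dA) ℂ) ⊗ₖ (B 0 ⊗ₖ G)).mulVec ψ)) :
    (E 0 0 + E 0 1 + E 1 0 - E 1 1) ^ 2 + 4 * ‖bg‖ ^ 2 ≤ 8 := by
  have him : bg.im = 0 := by
    have hH : ((1 : Matrix (Fin dA) (Fin dA) ℂ) ⊗ₖ (B 0 ⊗ₖ G)).IsHermitian := by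
      rw [Matrix.IsHermitian, Matrix.conjTranspose_kronecker, Matrix.conjTranspose_kronecker,
        (hB 0).1.eq, hG.1.eq, Matrix.conjTranspose_one]
    rw [hbg]
    exact hH.im_star_dotProduct_mulVec_self ψ
  have hn : ‖bg‖ ^ 2 = bg.re ^ 2 := by
    rw [Complex.sq_norm, Complex.normSq_apply, him]; ring
  let a := fun x => A x ⊗ₖ ((1 : Matrix (Fin dB) (Fin dB) ℂ) ⊗ₖ (1 : Matrix (Fin dC) (Fin dC) ℂ))
  let b := fun y => (1 : Matrix (Fin dA) (Fin dA) ℂ) ⊗ₖ (B y ⊗ₖ (1 : Matrix (Fin dC) (Fin dC) ℂ))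
  let g := (1 : Matrix (Fin dA) (Fin dA) ℂ) ⊗ₖ ((1 : Matrix (Fin dB) (Fin dB) ℂ) ⊗ₖ G)
  have hsa : ∀ x, (a x).IsHermitian := fun x => by
    simp only [a, Matrix.IsHermitian, Matrix.conjTranspose_kronecker, (hA x).1.eq,
      Matrix.conjTranspose_one]
  have hsb : ∀ x, (b x).IsHermitian := fun x => by
    simp only [b, Matrix.IsHermitian, Matrix.conjTranspose_kronecker, (hB x).1.eq,
      Matrix.conjTranspose_one]
  have hsg : g.IsHermitian := by
    simp only [g, Matrix.IsHermitian, Matrix.conjTranspose_kronecker, hG.1.eq,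
      Matrix.conjTranspose_one]
  have haa : ∀ x, a x * a x = 1 := fun x => by
    simp only [a, ← Matrix.mul_kronecker_mul, (hA x).2, mul_one, Matrix.one_kronecker_one]
  have hbb : ∀ x, b x * b x = 1 := fun x => by
    simp only [b, ← Matrix.mul_kronecker_mul, (hB x).2, mul_one, Matrix.one_kronecker_one]
  have hgg : g * g = 1 := by
    simp only [g, ← Matrix.mul_kronecker_mul, hG.2, mul_one, Matrix.one_kronecker_one]
  have hba : ∀ x y, b y * a x = a x * b y := fun x y => by
    simp only [a, b, ← Matrix.mul_kronecker_mul, mul_one, one_mul]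
  have hga : ∀ x, g * a x = a x * g := fun x => by
    simp only [a, g, ← Matrix.mul_kronecker_mul, mul_one, one_mul]
  have hgb : ∀ x, g * b x = b x * g := fun x => by
    simp only [b, g, ← Matrix.mul_kronecker_mul, mul_one, one_mul]
  have hE' : ∀ x y, E x y = expVal ψ (a x * b y) := fun x y => by
    simp only [a, b, ← Matrix.mul_kronecker_mul, mul_one, one_mul]
    exact hE x y
  have hg' : bg.re = expVal ψ (b 0 * g) := by
    simp only [b, g, ← Matrix.mul_kronecker_mul, mul_one, one_mul]
    rw [hbg]; rfl
  rw [hn, hg', hE', hE', hE', hE']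
  exact chsh_abstract ψ hψ (a 0) (a 1) (b 0) (b 1) g (hsa 0) (hsa 1) (hsb 0) (hsb 1) hsg
    (haa 0) (haa 1) (hbb 0) (hbb 1) hgg (hba _ _) (hba _ _) (hba _ _) (hba _ _)
    (hga _) (hga _) (hgb _) (hgb _)
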